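/- Let κ ∈ ℝ with κ ≠ 0 and let S = {(x¹,x²) ∈ ℝ² : x¹ + x² > 0}. A smooth function h : S → ℝ satisfies the system ∂₁²h = (κ/(x¹+x²)) ∂₁h, ∂₂²h = (κ/(x¹+x²)) ∂₂h, ∂₁∂₂h = 0 on S if and only if h is constant. (Equivalently, for the affine surface S_κ one has E_κ(0) = ℝ.) -/

import Mathlib

/-!
Put `u = ∂₁h` and `s = x¹ + x²`. Since mixed partials commute, `∂₂u = 0` while `∂₁u = (κ/s) u`.
Commuting derivatives once more, `0 = ∂₁∂₂u = ∂₂∂₁u = ∂₂((κ/s) u) = -(κ/s²) u`, so `u = 0` because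
`κ ≠ 0` (`eq_zero_of_pd`). The same argument gives `∂₂h = 0`; hence `h` has zero derivative on the
open half-plane `S`, which is convex, and `h` is constant there.
-/


open scoped ContDiff

/-- Partial derivative `∂_i f` in coordinates on `ℝⁿ`. -/
noncomputable def pd {n : ℕ} (i : Fin n) (f : (Fin n → ℝ) → ℝ) : (Fin n → ℝ) → ℝ :=
  fun x => fderiv ℝ f x (Pi.single i 1)

/-- Hessian `(Hess_h)_{ij} = ∂_i∂_j h − Σ_k Γ_{ij}^k ∂_k h` of `h` w.r.t. the connection `Γ`. -/
noncomputable def hessD {n : ℕ} (Γ : Fin n → Fin n → Fin n → (Fin n → ℝ) → ℝ)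
    (h : (Fin n → ℝ) → ℝ) (i j : Fin n) : (Fin n → ℝ) → ℝ :=
  fun x => pd i (pd j h) x - ∑ k, Γ i j k x * pd k h x

/-- Ricci tensor
`ρ_{ij} = Σ_k (∂_k Γ_{ij}^k − ∂_i Γ_{kj}^k) + Σ_{k,l} (Γ_{kl}^k Γ_{ij}^l − Γ_{il}^k Γ_{kj}^l)`. -/
noncomputable def ricciD {n : ℕ} (Γ : Fin n → Fin n → Fin n → (Fin n → ℝ) → ℝ)
    (i j : Fin n) : (Fin n → ℝ) → ℝ :=
  fun x => (∑ k, (pd k (Γ i j k) x - pd i (Γ k j k) x))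
    + ∑ k, ∑ l, (Γ k l k x * Γ i j l x - Γ i l k x * Γ k j l x)

/-- Symmetrized Ricci tensor `(ρ_s)_{ij} = (ρ_{ij} + ρ_{ji})/2`. -/
noncomputable def ricciSymD {n : ℕ} (Γ : Fin n → Fin n → Fin n → (Fin n → ℝ) → ℝ)
    (i j : Fin n) : (Fin n → ℝ) → ℝ :=
  fun x => (ricciD Γ i j x + ricciD Γ j i x) / 2

/-- The domain `S = {x¹ + x² > 0}`. -/
def halfPlane : Set (Fin 2 → ℝ) := {y | 0 < y 0 + y 1}

lemma isOpen_halfPlane : IsOpen halfPlane :=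
  isOpen_lt continuous_const (by fun_prop)

lemma convex_halfPlane : Convex ℝ halfPlane := by
  have : halfPlane = (fun y : Fin 2 → ℝ => y 0 + y 1) ⁻¹' Set.Ioi 0 := rfl
  rw [this]
  exact (convex_Ioi (0 : ℝ)).is_linear_preimage
    ⟨fun x y => by simp only [Pi.add_apply]; ring, fun c x => by simp; ring⟩

lemma contDiffOn_pd {f : (Fin 2 → ℝ) → ℝ} (hf : ContDiffOn ℝ ∞ f halfPlane) (i : Fin 2) :
    ContDiffOn ℝ ∞ (pd i f) halfPlane :=
  (hf.fderiv_of_isOpen isOpen_halfPlane (by simp)).clm_apply contDiffOn_const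

lemma pd_congr {f g : (Fin 2 → ℝ) → ℝ} (hfg : ∀ x ∈ halfPlane, f x = g x) (i : Fin 2) :
    ∀ x ∈ halfPlane, pd i f x = pd i g x := by
  intro x hx
  have : f =ᶠ[nhds x] g := Filter.eventuallyEq_of_mem (isOpen_halfPlane.mem_nhds hx) hfg
  simp only [pd, this.fderiv_eq]

lemma pd_zero (i : Fin 2) (c : ℝ) (x : Fin 2 → ℝ) : pd i (fun _ => c) x = 0 := by
  simp [pd]

lemma pd_comm {f : (Fin 2 → ℝ) → ℝ} (hf : ContDiffOn ℝ ∞ f halfPlane) (i j : Fin 2)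
    {x : Fin 2 → ℝ} (hx : x ∈ halfPlane) : pd i (pd j f) x = pd j (pd i f) x := by
  have hd : DifferentiableAt ℝ (fderiv ℝ f) x :=
    ((hf.fderiv_of_isOpen (m := ∞) isOpen_halfPlane (by simp)).differentiableOn
      (by simp)).differentiableAt (isOpen_halfPlane.mem_nhds hx)
  have key : ∀ a b : Fin 2, pd a (pd b f) x
      = fderiv ℝ (fderiv ℝ f) x (Pi.single a 1) (Pi.single b 1) := by
    intro a b
    have := (hd.hasFDerivAt.clm_apply
      (hasFDerivAt_const (Pi.single b (1 : ℝ) : Fin 2 → ℝ) x)).fderiv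
    change fderiv ℝ (fun y => fderiv ℝ f y (Pi.single b 1)) x (Pi.single a 1) = _
    rw [this]
    simp
  rw [key, key]
  exact (hf.contDiffAt (isOpen_halfPlane.mem_nhds hx)).isSymmSndFDerivAt
    (by simpa using (WithTop.coe_le_coe.2 le_top : ((2 : ℕ∞) : WithTop ℕ∞) ≤ ∞)) _ _

/-- The integrability condition of the overdetermined system `∂_j u = 0`, `∂_i u = (κ/s) u`
forces `u = 0`. -/
lemma eq_zero_of_pd {κ : ℝ} (hκ : κ ≠ 0) {u : (Fin 2 → ℝ) → ℝ}
    (hu : ContDiffOn ℝ ∞ u halfPlane) (i j : Fin 2)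
    (hj : ∀ x ∈ halfPlane, pd j u x = 0)
    (hi : ∀ x ∈ halfPlane, pd i u x = κ / (x 0 + x 1) * u x) :
    ∀ x ∈ halfPlane, u x = 0 := by
  intro x hx
  have hs : x 0 + x 1 ≠ 0 := ne_of_gt hx
  have h1 : pd j (pd i u) x = 0 := by
    rw [pd_comm hu j i hx, pd_congr (g := fun _ => 0) hj i x hx, pd_zero]
  rw [pd_congr hi j x hx] at h1
  have hdu : HasFDerivAt u (fderiv ℝ u x) x :=
    ((hu.differentiableOn (by simp)).differentiableAt
      (isOpen_halfPlane.mem_nhds hx)).hasFDerivAt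
  have hds : HasFDerivAt (fun y : Fin 2 → ℝ => y 0 + y 1)
      (ContinuousLinearMap.proj (R := ℝ) (φ := fun _ : Fin 2 => ℝ) 0
        + ContinuousLinearMap.proj 1) x :=
    (hasFDerivAt_apply 0 x).add (hasFDerivAt_apply 1 x)
  have hdq := ((hasDerivAt_inv hs).const_mul κ).comp_hasFDerivAt x hds
  have hd := (hdq.mul hdu).fderiv
  have hj' : fderiv ℝ u x (Pi.single j 1) = 0 := hj x hx
  have hsum : (Pi.single j (1 : ℝ) : Fin 2 → ℝ) 0 + (Pi.single j (1 : ℝ) : Fin 2 → ℝ) 1 = 1 := by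
    fin_cases j <;> simp
  change fderiv ℝ (fun y : Fin 2 → ℝ => κ / (y 0 + y 1) * u y) x (Pi.single j 1) = 0 at h1
  have h2 : fderiv ℝ (fun y : Fin 2 → ℝ => κ / (y 0 + y 1) * u y) x (Pi.single j 1)
      = u x * (κ * -((x 0 + x 1) ^ 2)⁻¹) := by
    refine (congrArg (fun L => L (Pi.single j 1)) hd).trans ?_
    simp [hj']
    linear_combination (-(u x * (κ * ((x 0 + x 1) ^ 2)⁻¹))) * hsum
  rw [h2] at h1
  simpa [hκ, hs] using h1

/-- for `κ ≠ 0`, a smooth function on `S = {x¹ + x² > 0}` satisfies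
`∂₁²h = (κ/(x¹+x²)) ∂₁h`, `∂₂²h = (κ/(x¹+x²)) ∂₂h`, `∂₁∂₂h = 0` iff it is constant;
i.e. `E_κ(0) = ℝ`. -/
theorem statement11 (κ : ℝ) (hκ : κ ≠ 0) (h : (Fin 2 → ℝ) → ℝ)
    (hh : ContDiffOn ℝ ∞ h {y : Fin 2 → ℝ | 0 < y 0 + y 1}) :
    (∀ x ∈ {y : Fin 2 → ℝ | 0 < y 0 + y 1},
      pd 0 (pd 0 h) x = κ / (x 0 + x 1) * pd 0 h x ∧
      pd 1 (pd 1 h) x = κ / (x 0 + x 1) * pd 1 h x ∧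
      pd 0 (pd 1 h) x = 0)
    ↔ ∃ c : ℝ, ∀ x ∈ {y : Fin 2 → ℝ | 0 < y 0 + y 1}, h x = c := by
  change ContDiffOn ℝ ∞ h halfPlane at hh
  change (∀ x ∈ halfPlane, _) ↔ ∃ c : ℝ, ∀ x ∈ halfPlane, h x = c
  constructor
  · intro H
    have h0 : ∀ x ∈ halfPlane, pd 0 h x = 0 :=
      eq_zero_of_pd hκ (contDiffOn_pd hh 0) 0 1
        (fun x hx => (pd_comm hh 1 0 hx).trans (H x hx).2.2) (fun x hx => (H x hx).1)
    have h1 : ∀ x ∈ halfPlane, pd 1 h x = 0 :=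
      eq_zero_of_pd hκ (contDiffOn_pd hh 1) 1 0
        (fun x hx => (H x hx).2.2) (fun x hx => (H x hx).2.1)
    have hz : Set.EqOn (fderiv ℝ h) 0 halfPlane := by
      intro x hx
      refine ContinuousLinearMap.coe_injective (LinearMap.pi_ext' fun i => ?_)
      ext
      fin_cases i
      · simpa [pd] using h0 x hx
      · simpa [pd] using h1 x hx
    obtain ⟨c, hc⟩ := isOpen_halfPlane.exists_is_const_of_fderiv_eq_zero
      convex_halfPlane.isPreconnected (hh.differentiableOn (by simp)) hz
    exact ⟨c, hc⟩
  · rintro ⟨c, hc⟩ x hx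
    have hp : ∀ i, ∀ y ∈ halfPlane, pd i h y = 0 := fun i y hy => by
      rw [pd_congr (g := fun _ => c) hc i y hy, pd_zero]
    have hpp : ∀ i j, pd i (pd j h) x = 0 := fun i j => by
      rw [pd_congr (g := fun _ => 0) (hp j) i x hx, pd_zero]
    simp [hpp, hp _ x hx]
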